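/- Let I be an arithmetically Gorenstein homogeneous ideal of height three in R that is not a complete intersection, let f, g, h be a regular sequence of homogeneous elements of I such that deg f equals the least degree of a nonzero homogeneous element of I, and let u be a homogeneous element of R with (f,g,h) : I = (f,g,h,u). Then u, f is an R-regular sequence (in particular u ≠ 0 and u and f have no common factor of positive degree). -/

import Mathlib

/-
Common setup: `R = k[x₀,…,xₙ]` is the standard graded polynomial ring
`MvPolynomial (Fin (n+1)) k` over a field `k`.
-/

open CategoryTheory MvPolynomial RingTheory

noncomputable section

variable {k : Type} [Field k] {n : ℕ}

/-- A homogeneous ideal: one generated by homogeneous elements. -/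
def IsHomogeneousIdeal (I : Ideal (MvPolynomial (Fin (n+1)) k)) : Prop :=
  ∃ S : Set (MvPolynomial (Fin (n+1)) k),
    (∀ f ∈ S, ∃ d, MvPolynomial.IsHomogeneous f d) ∧ I = Ideal.span S

/-- The height of an ideal: the infimum of the heights of the primes containing it. -/
def idealHeight (I : Ideal (MvPolynomial (Fin (n+1)) k)) : ℕ∞ :=
  ⨅ (p : PrimeSpectrum (MvPolynomial (Fin (n+1)) k)) (_ : I ≤ p.asIdeal), Order.height p

/-- A complete intersection ideal: one generated by a regular sequence of homogeneous
elements of positive degree. -/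
def IsCI (I : Ideal (MvPolynomial (Fin (n+1)) k)) : Prop :=
  ∃ l : List (MvPolynomial (Fin (n+1)) k),
    (∀ f ∈ l, ∃ d, 0 < d ∧ MvPolynomial.IsHomogeneous f d) ∧
    RingTheory.Sequence.IsRegular (MvPolynomial (Fin (n+1)) k) l ∧
    I = Ideal.span {x | x ∈ l}

/-- Vanishing of `Ext^i_R(R/I, R)`. -/
def extVanishes (I : Ideal (MvPolynomial (Fin (n+1)) k)) (i : ℕ) : Prop :=
  Subsingleton (((Ext (MvPolynomial (Fin (n+1)) k) (ModuleCat (MvPolynomial (Fin (n+1)) k)) i).obj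
    (Opposite.op (ModuleCat.of _ (MvPolynomial (Fin (n+1)) k ⧸ I)))).obj
    (ModuleCat.of _ (MvPolynomial (Fin (n+1)) k)))

/-- `Ext^i_R(R/I, R)` is a cyclic `R`-module. -/
def extCyclic (I : Ideal (MvPolynomial (Fin (n+1)) k)) (i : ℕ) : Prop :=
  ∃ m : (((Ext (MvPolynomial (Fin (n+1)) k) (ModuleCat (MvPolynomial (Fin (n+1)) k)) i).obj
      (Opposite.op (ModuleCat.of _ (MvPolynomial (Fin (n+1)) k ⧸ I)))).obj
      (ModuleCat.of _ (MvPolynomial (Fin (n+1)) k))),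
    Submodule.span (MvPolynomial (Fin (n+1)) k) {m} = ⊤

/-- An arithmetically Gorenstein homogeneous ideal of height three: a proper homogeneous
ideal of height 3 with `Ext^i_R(R/I, R) = 0` for `i ≠ 3` and `Ext^3_R(R/I, R)` cyclic. -/
def IsArithGorHt3 (I : Ideal (MvPolynomial (Fin (n+1)) k)) : Prop :=
  I ≠ ⊤ ∧ IsHomogeneousIdeal I ∧ idealHeight I = 3 ∧
    (∀ i : ℕ, i ≠ 3 → extVanishes I i) ∧ extCyclic I 3

/-- `μ(I)`: the least cardinality of a subset of `R` generating `I`. -/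
def mu (I : Ideal (MvPolynomial (Fin (n+1)) k)) : ℕ :=
  sInf {m : ℕ | ∃ S : Finset (MvPolynomial (Fin (n+1)) k),
    S.card = m ∧ Ideal.span (S : Set (MvPolynomial (Fin (n+1)) k)) = I}

/-- `a_i(I)`: the least integer `d` such that `I` contains a regular sequence of `i`
homogeneous elements each of degree at most `d`. -/
def aDeg (i : ℕ) (I : Ideal (MvPolynomial (Fin (n+1)) k)) : ℕ :=
  sInf {d : ℕ | ∃ l : List (MvPolynomial (Fin (n+1)) k), l.length = i ∧
    (∀ f ∈ l, f ∈ I) ∧ (∀ f ∈ l, ∃ e ≤ d, MvPolynomial.IsHomogeneous f e) ∧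
    RingTheory.Sequence.IsRegular (MvPolynomial (Fin (n+1)) k) l}

/-- A minimal complete intersection inside a height-three homogeneous ideal `I`:
a regular sequence `f₁, f₂, f₃` of homogeneous elements of `I` with `deg fⱼ = a_j(I)`. -/
def IsMinCI (I : Ideal (MvPolynomial (Fin (n+1)) k)) (f₁ f₂ f₃ : MvPolynomial (Fin (n+1)) k) :
    Prop :=
  f₁ ∈ I ∧ f₂ ∈ I ∧ f₃ ∈ I ∧
  MvPolynomial.IsHomogeneous f₁ (aDeg 1 I) ∧ MvPolynomial.IsHomogeneous f₂ (aDeg 2 I) ∧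
  MvPolynomial.IsHomogeneous f₃ (aDeg 3 I) ∧
  RingTheory.Sequence.IsRegular (MvPolynomial (Fin (n+1)) k) [f₁, f₂, f₃]

/-!
Let `J = (f, g, h)`. Multiplication by an element of `J : (J : I)` kills every homomorphism
`R ⧸ I → R ⧸ J` and hence, by dimension shifting along the regular sequence, `Ext³(R ⧸ I, R)`.
For any finite `M` of finite projective dimension, `∏ᵢ ann Extⁱ(M, R) ≤ ann Ext⁰(M, M) = ann M`, by
shifting along finite free presentations in the second argument. Hilbert's syzygy theorem lets us
take `M = R ⧸ I`, where only `Ext³` is nonzero, so `J : (J : I) = I`.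

If `p` divides `u` and `f = p * f'`, then `f' * (J + (u)) ⊆ J`, that is, `f' ∈ J : (J : I) = I`, and
the minimality of `deg f` forces `p` to be a unit.
-/

section Comparison

universe w v u

theorem subsingleton_abelianExt {R : Type*} [Ring R] {C : Type u} [Category.{v} C] [Abelian C]
    [Linear R C] [EnoughProjectives C] [HasExt.{w} C] {X Y : C} {i : ℕ}
    (h : Subsingleton (((Ext R C i).obj (Opposite.op X)).obj Y)) :
    Subsingleton (Abelian.Ext X Y i) := by
  let P := projectiveResolution X
  have exact_at : ((P.complex.linearYonedaObj R Y).sc'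
      ((ComplexShape.up ℕ).prev i) i (i + 1)).Exact := by
    rw [← HomologicalComplex.exactAt_iff' _ _ i (i + 1) rfl (by simp),
      HomologicalComplex.exactAt_iff_isZero_homology]
    exact (ModuleCat.isZero_of_subsingleton _).of_iso (P.isoExt i Y).symm
  refine subsingleton_of_forall_eq 0 fun α ↦ ?_
  obtain ⟨f, hf, rfl⟩ := P.extMk_surjective α (i + 1) rfl
  obtain ⟨g, hg⟩ : ∃ g : P.complex.X ((ComplexShape.up ℕ).prev i) ⟶ Y, P.complex.d _ _ ≫ g = f :=
    (ShortComplex.moduleCat_exact_iff _).mp exact_at f hf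
  cases i with
  | zero =>
    have f_eq_zero : f = 0 := by rw [← hg, P.complex.shape _ _ (by simp), Limits.zero_comp]
    simp only [f_eq_zero, P.extMk_zero]
  | succ p =>
    exact (P.extMk_eq_zero_iff f (p + 2) rfl hf _ (by simp)).mpr ⟨g, hg⟩

end Comparison

section ExtAnnihilator

open Abelian.Ext

universe u

variable {R : Type u} [CommRing R]

theorem annihilator_le_annihilator_ext (M N : ModuleCat.{u} R) (i : ℕ) :
    Module.annihilator R M ≤ Module.annihilator R (Abelian.Ext M N i) := by
  intro r hr
  rw [Module.mem_annihilator] at hr ⊢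
  intro α
  have smul_id : r • 𝟙 M = 0 := ModuleCat.hom_ext (LinearMap.ext hr)
  rw [← mk₀_id_comp α, ← smul_comp, ← mk₀_smul, smul_id, mk₀_zero, zero_comp]

theorem annihilator_hom_eq_annihilator_ext_zero (M N : Type u) [AddCommGroup M] [Module R M]
    [AddCommGroup N] [Module R N] :
    Module.annihilator R (M →ₗ[R] N) =
      Module.annihilator R (Abelian.Ext (ModuleCat.of R M) (ModuleCat.of R N) 0) :=
  ((linearEquiv₀.trans ModuleCat.homLinearEquiv).annihilator_eq).symm

theorem annihilator_ext_le_of_comp_mk₀_eq_zero {S : ShortComplex (ModuleCat.{u} R)}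
    (hS : S.ShortExact) (M : ModuleCat.{u} R) (i : ℕ)
    (h : ∀ α : Abelian.Ext M S.X₁ (i + 1), α.comp (mk₀ S.f) (add_zero _) = 0) :
    Module.annihilator R (Abelian.Ext M S.X₃ i) ≤
      Module.annihilator R (Abelian.Ext M S.X₁ (i + 1)) := by
  intro r hr
  rw [Module.mem_annihilator] at hr ⊢
  intro α
  obtain ⟨β, rfl⟩ := covariant_sequence_exact₁ M hS α (h α) rfl
  rw [← smul_comp, hr, zero_comp]

theorem annihilator_ext_quotSMulTop_le {M A : ModuleCat.{u} R} {x : R}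
    (x_mem : x ∈ Module.annihilator R M) (x_reg : IsSMulRegular A x) (i : ℕ) :
    Module.annihilator R (Abelian.Ext M (ModuleCat.of R (QuotSMulTop x A)) i) ≤
      Module.annihilator R (Abelian.Ext M A (i + 1)) := by
  refine annihilator_ext_le_of_comp_mk₀_eq_zero x_reg.smulShortComplex_shortExact M i fun α ↦ ?_
  rw [ModuleCat.smulShortComplex_f_eq_smul_id]
  exact (smul_eq_comp_mk₀ α x).symm.trans
    (Module.mem_annihilator.mp (annihilator_le_annihilator_ext M A _ x_mem) α)

theorem annihilator_hom_quotient_le_annihilator_ext {M : Type u} [AddCommGroup M] [Module R M]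
    {A : Type u} [AddCommGroup A] [Module R A] {rs : List R}
    (rs_mem : ∀ r ∈ rs, r ∈ Module.annihilator R M) (rs_reg : Sequence.IsWeaklyRegular A rs) :
    Module.annihilator R (M →ₗ[R] A ⧸ (Ideal.ofList rs • ⊤ : Submodule R A)) ≤
      Module.annihilator R (Abelian.Ext (ModuleCat.of R M) (ModuleCat.of R A) rs.length) := by
  induction rs generalizing A with
  | nil =>
    rw [List.length_nil, ← annihilator_hom_eq_annihilator_ext_zero]
    have e : (A ⧸ (Ideal.ofList ([] : List R) • ⊤ : Submodule R A)) ≃ₗ[R] A :=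
      Submodule.quotEquivOfEqBot _ (by rw [Ideal.ofList_nil, Submodule.bot_smul])
    exact (LinearEquiv.congrRight e).annihilator_eq.le
  | cons x rs ih =>
    rw [Sequence.isWeaklyRegular_cons_iff] at rs_reg
    rw [List.forall_mem_cons] at rs_mem
    have e : (A ⧸ (Ideal.ofList (x :: rs) • ⊤ : Submodule R A)) ≃ₗ[R]
        QuotSMulTop x A ⧸ (Ideal.ofList rs • ⊤ : Submodule R (QuotSMulTop x A)) :=
      Submodule.quotOfListConsSMulTopEquivQuotSMulTopInner A x rs
    calc
      _ = Module.annihilator R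
          (M →ₗ[R] QuotSMulTop x A ⧸ (Ideal.ofList rs • ⊤ : Submodule R (QuotSMulTop x A))) :=
        (LinearEquiv.congrRight e).annihilator_eq
      _ ≤ _ := ih rs_mem.2 rs_reg.2
      _ ≤ _ := annihilator_ext_quotSMulTop_le (M := ModuleCat.of R M) (A := ModuleCat.of R A)
        rs_mem.1 rs_reg.1 rs.length

theorem annihilator_ext_self_le_of_free (M : ModuleCat.{u} R) (F : Type u) [AddCommGroup F]
    [Module R F] [Module.Free R F] [Module.Finite R F] (j : ℕ) :
    Module.annihilator R (Abelian.Ext M (ModuleCat.of R R) j) ≤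
      Module.annihilator R (Abelian.Ext M (ModuleCat.of R F) j) := by
  intro r hr
  rw [Module.mem_annihilator] at hr ⊢
  intro α
  let b := Module.Free.chooseBasis R F
  have id_eq_sum : 𝟙 (ModuleCat.of R F) = ∑ i, ModuleCat.ofHom (b.coord i) ≫
      ModuleCat.ofHom (LinearMap.toSpanSingleton R F (b i)) := by
    ext x
    simp [ModuleCat.hom_sum]
  rw [← comp_mk₀_id α, id_eq_sum, mk₀_sum, comp_sum, Finset.smul_sum]
  refine Finset.sum_eq_zero fun i _ ↦ ?_
  rw [← mk₀_comp_mk₀, ← comp_assoc_of_second_deg_zero, ← smul_comp, hr, zero_comp]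

theorem annihilator_ext_mul_annihilator_ext_le {S : ShortComplex (ModuleCat.{u} R)}
    (hS : S.ShortExact) (M : ModuleCat.{u} R) (j : ℕ) :
    Module.annihilator R (Abelian.Ext M S.X₂ j) *
        Module.annihilator R (Abelian.Ext M S.X₁ (j + 1)) ≤
      Module.annihilator R (Abelian.Ext M S.X₃ j) := by
  refine Ideal.mul_le.mpr fun r hr s hs ↦ ?_
  rw [Module.mem_annihilator] at hr hs ⊢
  intro α
  obtain ⟨β, hβ⟩ := covariant_sequence_exact₃ M hS (s • α) rfl (by rw [smul_comp, hs])
  rw [mul_smul, ← hβ, ← smul_comp, hr, zero_comp]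

theorem prod_annihilator_ext_self_le [IsNoetherianRing R] (M : ModuleCat.{u} R) (d j : ℕ)
    [HasProjectiveDimensionLE M d] (K : Type u) [AddCommGroup K] [Module R K]
    [Module.Finite R K] :
    ∏ i ∈ Finset.Ico j (d + 1), Module.annihilator R (Abelian.Ext M (ModuleCat.of R R) i) ≤
      Module.annihilator R (Abelian.Ext M (ModuleCat.of R K) j) := by
  induction hm : d + 1 - j generalizing j K with
  | zero =>
    have : Subsingleton (Abelian.Ext M (ModuleCat.of R K) j) :=
      HasProjectiveDimensionLT.subsingleton M (d + 1) j (by lia) _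
    exact le_top.trans (Module.annihilator_eq_top_iff.mpr this).ge
  | succ m ih =>
    obtain ⟨F, _, _, _, _, f, hf⟩ := Module.exists_finite_presentation R K
    rw [Finset.prod_eq_prod_Ico_succ_bot (by lia)]
    exact (Ideal.mul_mono (annihilator_ext_self_le_of_free M F j)
      (ih (j + 1) (LinearMap.ker f) (by lia))).trans
      (annihilator_ext_mul_annihilator_ext_le (LinearMap.shortExact_shortComplexKer hf) M j)

theorem annihilator_ext_zero_self_le (M : ModuleCat.{u} R) :
    Module.annihilator R (Abelian.Ext M M 0) ≤ Module.annihilator R M := by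
  intro r hr
  rw [Module.mem_annihilator] at hr ⊢
  have smul_id : r • 𝟙 M = 0 := (mk₀_eq_zero_iff _).mp (by rw [mk₀_smul, hr])
  exact LinearMap.congr_fun (ModuleCat.hom_ext_iff.mp smul_id)

theorem annihilator_ext_self_le_annihilator [IsNoetherianRing R] (M : ModuleCat.{u} R)
    [Module.Finite R M] {d c : ℕ} [HasProjectiveDimensionLE M d]
    (hM : ∀ i ≠ c, Subsingleton (Abelian.Ext M (ModuleCat.of R R) i)) :
    Module.annihilator R (Abelian.Ext M (ModuleCat.of R R) c) ≤ Module.annihilator R M := by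
  let a (i : ℕ) := Module.annihilator R (Abelian.Ext M (ModuleCat.of R R) i)
  have a_eq_one : ∀ i ≠ c, a i = 1 := fun i hi ↦
    (Module.annihilator_eq_top_iff.mpr (hM i hi)).trans Ideal.one_eq_top.symm
  calc
    a c ≤ ∏ i ∈ Finset.Ico 0 (d + 1), a i := by
      by_cases hc : c ∈ Finset.Ico 0 (d + 1)
      · exact (Finset.prod_eq_single_of_mem c hc fun i _ ↦ a_eq_one i).ge
      · rw [Finset.prod_eq_one fun i hi ↦ a_eq_one i (ne_of_mem_of_not_mem hi hc)]
        exact le_top.trans Ideal.one_eq_top.ge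
    _ ≤ _ := prod_annihilator_ext_self_le M d 0 M
    _ ≤ _ := annihilator_ext_zero_self_le M

theorem colon_colon_le_annihilator_hom (I J : Ideal R) :
    J.colon (J.colon (I : Set R)) ≤ Module.annihilator R ((R ⧸ I) →ₗ[R] R ⧸ J) := by
  intro v hv
  refine Module.mem_annihilator.mpr fun φ ↦ ?_
  obtain ⟨w, hw⟩ := Ideal.Quotient.mk_surjective (φ 1)
  have w_mem : w ∈ J.colon (I : Set R) := Submodule.mem_colon.mpr fun a ha ↦ by
    have smul_one : a • (1 : R ⧸ I) = 0 :=
      Module.mem_annihilator.mp (Ideal.annihilator_quotient.ge ha) 1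
    have smul_mk : a • Ideal.Quotient.mk J w = 0 := by rw [hw, ← map_smul, smul_one, map_zero]
    rw [smul_eq_mul, mul_comm]
    exact Ideal.Quotient.eq_zero_iff_mem.mp smul_mk
  have smul_map_one : v • φ 1 = 0 := by
    rw [← hw]
    exact Ideal.Quotient.eq_zero_iff_mem.mpr (Submodule.mem_colon.mp hv w w_mem)
  refine Submodule.linearMap_qext _ (LinearMap.ext_ring ?_)
  exact smul_map_one

theorem colon_colon_ofList_le [IsNoetherianRing R] {I : Ideal R} {rs : List R} {d : ℕ}
    [HasProjectiveDimensionLE (ModuleCat.of R (R ⧸ I)) d] (rs_mem : ∀ r ∈ rs, r ∈ I)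
    (rs_reg : Sequence.IsWeaklyRegular R rs)
    (hI : ∀ i ≠ rs.length,
      Subsingleton (Abelian.Ext (ModuleCat.of R (R ⧸ I)) (ModuleCat.of R R) i)) :
    (Ideal.ofList rs).colon ((Ideal.ofList rs).colon (I : Set R)) ≤ I := by
  have ann_eq : Module.annihilator R (R ⧸ I) = I := Ideal.annihilator_quotient
  calc
    _ ≤ Module.annihilator R ((R ⧸ I) →ₗ[R] R ⧸ Ideal.ofList rs) :=
      colon_colon_le_annihilator_hom I _
    _ = Module.annihilator R ((R ⧸ I) →ₗ[R] R ⧸ (Ideal.ofList rs • ⊤ : Submodule R R)) := by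
      rw [smul_eq_mul, Ideal.mul_top]
    _ ≤ _ := annihilator_hom_quotient_le_annihilator_ext (by rwa [ann_eq]) rs_reg
    _ ≤ Module.annihilator R (R ⧸ I) :=
      annihilator_ext_self_le_annihilator (ModuleCat.of R (R ⧸ I)) (d := d) hI
    _ = I := ann_eq

end ExtAnnihilator

section HilbertSyzygy

universe u

open scoped Polynomial TensorProduct

theorem hasProjectiveDimensionLE_baseChange {A B : Type u} [CommRing A] [CommRing B] [Algebra A B]
    [Module.Flat A B] (N : ModuleCat.{u} A) (d : ℕ) [HasProjectiveDimensionLE N d] :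
    HasProjectiveDimensionLE (ModuleCat.of B (B ⊗[A] N)) d := by
  induction d generalizing N with
  | zero =>
    have hN : HasProjectiveDimensionLE N 0 := ‹_›
    rw [← projective_iff_hasProjectiveDimensionLE_zero, ← IsProjective.iff_projective] at hN ⊢
    infer_instance
  | succ d ih =>
    let S := N.projectiveShortComplex
    have hS : S.ShortExact := N.shortExact_projectiveShortComplex
    have exact_S := (ShortComplex.ShortExact.moduleCat_exact_iff_function_exact S).mp hS.exact
    have exact_T : Function.Exact (S.f.hom.baseChange B) (S.g.hom.baseChange B) :=
      Module.Flat.lTensor_exact B exact_S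
    let T : ShortComplex (ModuleCat.{u} B) := .mk (ModuleCat.ofHom (S.f.hom.baseChange B))
      (ModuleCat.ofHom (S.g.hom.baseChange B)) (ModuleCat.hom_ext exact_T.linearMap_comp_eq_zero)
    have hT : T.ShortExact := ModuleCat.shortComplex_shortExact T exact_T
      (Module.Flat.lTensor_preserves_injective_linearMap _ hS.moduleCat_injective_f)
      (LinearMap.lTensor_surjective _ hS.moduleCat_surjective_g)
    have := (hS.hasProjectiveDimensionLT_X₃_iff d inferInstance).mp ‹_›
    have : Module.Projective B (B ⊗[A] S.X₂) := inferInstance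
    exact (hT.hasProjectiveDimensionLT_X₃_iff d
      ((IsProjective.iff_projective (R := B) (B ⊗[A] S.X₂)).mp this)).mpr (ih S.X₁)

theorem polynomialTensor_hom_ext {A M N : Type*} [CommSemiring A] [AddCommMonoid M] [Module A M]
    [AddCommMonoid N] [Module A N] {f g : A[X] ⊗[A] M →ₗ[A] N}
    (h : ∀ i m, f ((Polynomial.X ^ i) ⊗ₜ m) = g ((Polynomial.X ^ i) ⊗ₜ m)) : f = g := by
  refine TensorProduct.ext <| Polynomial.lhom_ext' fun i ↦
    LinearMap.ext_ring (LinearMap.ext fun m ↦ ?_)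
  simpa [Polynomial.monomial_one_right_eq_X_pow] using h i m

variable (A : Type u) [CommRing A] (M : Type u) [AddCommGroup M] [Module A M] [Module A[X] M]
  [IsScalarTower A A[X] M]

/-- The map `p ⊗ m ↦ X * p ⊗ m - p ⊗ X • m` whose cokernel, for a module `M` over `A[X]`, is `M`. -/
def characteristicMap : A[X] ⊗[A] M →ₗ[A[X]] A[X] ⊗[A] M :=
  LinearMap.lsmul A[X] _ Polynomial.X -
    ((LinearMap.lsmul A[X] M Polynomial.X).restrictScalars A).baseChange A[X]

/-- The action `p ⊗ m ↦ p • m` of polynomials on a module over `A[X]`. -/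
def actionMap : A[X] ⊗[A] M →ₗ[A[X]] M := LinearMap.id.liftBaseChange A[X]

variable {M}

theorem characteristicMap_tmul (p : A[X]) (m : M) :
    characteristicMap A M (p ⊗ₜ m) =
      (Polynomial.X * p) ⊗ₜ m - p ⊗ₜ ((Polynomial.X : A[X]) • m) := rfl

theorem actionMap_tmul (p : A[X]) (m : M) : actionMap A M (p ⊗ₜ m) = p • m := rfl

theorem actionMap_characteristicMap (t : A[X] ⊗[A] M) :
    actionMap A M (characteristicMap A M t) = 0 := by
  induction t with
  | zero => simp only [map_zero]
  | add s t hs ht => simp only [map_add, hs, ht, add_zero]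
  | tmul p m =>
    rw [characteristicMap_tmul, map_sub, actionMap_tmul, actionMap_tmul, mul_comm, mul_smul,
      sub_self]

variable (M) in
/-- The values on `X ^ i ⊗ m` of the homotopy contracting the characteristic sequence, namely
`∑ j < i, X ^ j ⊗ X ^ (i - 1 - j) • m`. -/
def characteristicHomotopyPow : ℕ → M →ₗ[A] A[X] ⊗[A] M
  | 0 => 0
  | i + 1 => TensorProduct.mk A A[X] M (Polynomial.X ^ i) +
      characteristicHomotopyPow i ∘ₗ (LinearMap.lsmul A[X] M Polynomial.X).restrictScalars A

variable (M) in
/-- The `A`-linear homotopy contracting the characteristic sequence of an `A[X]`-module. -/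
def characteristicHomotopy : A[X] ⊗[A] M →ₗ[A] A[X] ⊗[A] M :=
  TensorProduct.lift ((Polynomial.basisMonomials A).constr A (characteristicHomotopyPow A M))

theorem characteristicHomotopy_X_pow_tmul (i : ℕ) (m : M) :
    characteristicHomotopy A M ((Polynomial.X ^ i) ⊗ₜ m) = characteristicHomotopyPow A M i m := by
  rw [characteristicHomotopy, TensorProduct.lift.tmul, ← Polynomial.monomial_one_right_eq_X_pow,
    ← congrFun (Polynomial.coe_basisMonomials A) i, Module.Basis.constr_basis]

theorem characteristicHomotopy_one_tmul (m : M) :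
    characteristicHomotopy A M (1 ⊗ₜ m) = 0 :=
  characteristicHomotopy_X_pow_tmul A 0 m

theorem characteristicHomotopy_X_pow_succ_tmul (i : ℕ) (m : M) :
    characteristicHomotopy A M ((Polynomial.X ^ (i + 1)) ⊗ₜ m) =
      (Polynomial.X ^ i) ⊗ₜ m +
        characteristicHomotopy A M ((Polynomial.X ^ i) ⊗ₜ ((Polynomial.X : A[X]) • m)) := by
  simp only [characteristicHomotopy_X_pow_tmul]; rfl

theorem characteristicHomotopy_characteristicMap (t : A[X] ⊗[A] M) :
    characteristicHomotopy A M (characteristicMap A M t) = t := by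
  suffices characteristicHomotopy A M ∘ₗ (characteristicMap A M).restrictScalars A = .id from
    LinearMap.congr_fun this t
  refine polynomialTensor_hom_ext fun i m ↦ ?_
  simp [characteristicMap_tmul, ← pow_succ', characteristicHomotopy_X_pow_succ_tmul]

theorem characteristicMap_characteristicHomotopy (t : A[X] ⊗[A] M) :
    characteristicMap A M (characteristicHomotopy A M t) = t - 1 ⊗ₜ actionMap A M t := by
  suffices (characteristicMap A M).restrictScalars A ∘ₗ characteristicHomotopy A M =
      .id - TensorProduct.mk A A[X] M 1 ∘ₗ (actionMap A M).restrictScalars A from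
    LinearMap.congr_fun this t
  refine polynomialTensor_hom_ext fun i ↦ ?_
  induction i with
  | zero =>
    intro m
    simp [characteristicHomotopy_one_tmul, actionMap_tmul]
  | succ i ih =>
    intro m
    have ih_smul : characteristicMap A M
        (characteristicHomotopy A M ((Polynomial.X ^ i) ⊗ₜ ((Polynomial.X : A[X]) • m))) =
        (Polynomial.X ^ i) ⊗ₜ ((Polynomial.X : A[X]) • m) -
          1 ⊗ₜ ((Polynomial.X : A[X]) ^ i • (Polynomial.X : A[X]) • m) := ih _
    simp only [LinearMap.comp_apply, LinearMap.restrictScalars_apply, LinearMap.sub_apply,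
      LinearMap.id_apply, TensorProduct.mk_apply, actionMap_tmul,
      characteristicHomotopy_X_pow_succ_tmul, map_add, characteristicMap_tmul, ih_smul]
    rw [← pow_succ', sub_add_sub_cancel, ← mul_smul, ← pow_succ]

theorem injective_characteristicMap : Function.Injective (characteristicMap A M) :=
  Function.LeftInverse.injective (characteristicHomotopy_characteristicMap A)

theorem exact_characteristicMap_actionMap :
    Function.Exact (characteristicMap A M) (actionMap A M) := by
  refine fun t ↦ ⟨fun ht ↦ ⟨characteristicHomotopy A M t, ?_⟩, ?_⟩
  · rw [characteristicMap_characteristicHomotopy, ht, TensorProduct.tmul_zero, sub_zero]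
  · rintro ⟨t, rfl⟩
    exact actionMap_characteristicMap A t

theorem surjective_actionMap : Function.Surjective (actionMap A M) :=
  fun m ↦ ⟨1 ⊗ₜ m, one_smul _ m⟩

variable {A} in
theorem hasProjectiveDimensionLE_polynomial {d : ℕ}
    (hA : ∀ N : ModuleCat.{u} A, HasProjectiveDimensionLE N d) (M : ModuleCat.{u} A[X]) :
    HasProjectiveDimensionLE M (d + 1) := by
  let _ : Module A M := Module.compHom M (algebraMap A A[X])
  have : IsScalarTower A A[X] M := .of_algebraMap_smul fun _ _ ↦ rfl
  let S : ShortComplex (ModuleCat.{u} A[X]) :=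
    .mk (X₃ := M) (ModuleCat.ofHom (characteristicMap A M)) (ModuleCat.ofHom (actionMap A M))
      (ModuleCat.hom_ext (exact_characteristicMap_actionMap A).linearMap_comp_eq_zero)
  have hS : S.ShortExact := ModuleCat.shortComplex_shortExact S
    (exact_characteristicMap_actionMap A) (injective_characteristicMap A) (surjective_actionMap A)
  have := hA (ModuleCat.of A M)
  have hM : HasProjectiveDimensionLE (ModuleCat.of A[X] (A[X] ⊗[A] M)) d :=
    hasProjectiveDimensionLE_baseChange (ModuleCat.of A M) d
  exact hS.hasProjectiveDimensionLT_X₃ (d + 1) hM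
    (hasProjectiveDimensionLT_of_ge _ (d + 1) _ (by lia))

theorem hilbert_syzygy (K : Type u) [Field K] (m : ℕ)
    (M : ModuleCat.{u} (MvPolynomial (Fin m) K)) : HasProjectiveDimensionLE M m := by
  induction m with
  | zero =>
    have : IsSemisimpleRing (MvPolynomial (Fin 0) K) :=
      (MvPolynomial.isEmptyRingEquiv K (Fin 0)).symm.isSemisimpleRing
    rw [← projective_iff_hasProjectiveDimensionLE_zero, ← IsProjective.iff_projective]
    exact Module.projective_of_isSemisimpleRing _ _
  | succ m ih =>
    let e := (MvPolynomial.finSuccEquiv K m).symm.toRingEquiv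
    let _ : Module (MvPolynomial (Fin m) K)[X] M := Module.compHom M e.toRingHom
    let _ := RingHomInvPair.of_ringEquiv e
    let _ := RingHomInvPair.symm (RingHomClass.toRingHom e) (RingHomClass.toRingHom e.symm)
    have := hasProjectiveDimensionLE_polynomial ih (ModuleCat.of _ M)
    let e' : M ≃ₛₗ[RingHomClass.toRingHom e] M :=
      { AddEquiv.refl M with map_smul' := fun _ _ ↦ rfl }
    exact ModuleCat.hasProjectiveDimensionLE_of_semiLinearEquiv
      (M := ModuleCat.of (MvPolynomial (Fin m) K)[X] M) e e' (m + 1)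

end HilbertSyzygy

section Polynomial

variable {σ K : Type*} [Field K]

theorem isUnit_of_totalDegree_eq_zero {p : MvPolynomial σ K} (hp : p ≠ 0)
    (hdeg : p.totalDegree = 0) : IsUnit p := by
  rw [totalDegree_eq_zero_iff_eq_C] at hdeg
  rw [hdeg, isUnit_iff_eq_C_of_isReduced]
  refine ⟨_, isUnit_iff_ne_zero.mpr fun h ↦ hp ?_, rfl⟩
  rw [hdeg, h, C_0]

theorem exists_pos_isHomogeneous_of_not_isUnit {p : MvPolynomial σ K} {d : ℕ}
    (hp : p.IsHomogeneous d) (hunit : ¬IsUnit p) : ∃ e, 0 < e ∧ p.IsHomogeneous e := by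
  obtain rfl | p_ne_zero := eq_or_ne p 0
  · exact ⟨1, one_pos, isHomogeneous_zero σ K 1⟩
  · exact ⟨p.totalDegree, Nat.pos_of_ne_zero (hunit ∘ isUnit_of_totalDegree_eq_zero p_ne_zero),
      (hp.totalDegree p_ne_zero).symm ▸ hp⟩

theorem constantCoeff_eq_zero_of_isHomogeneous {p : MvPolynomial σ K} {d : ℕ}
    (hp : p.IsHomogeneous d) (hunit : ¬IsUnit p) : constantCoeff p = 0 := by
  obtain ⟨e, e_pos, he⟩ := exists_pos_isHomogeneous_of_not_isUnit hp hunit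
  exact he.coeff_eq_zero (by simpa using e_pos.ne)

theorem homogeneousComponent_totalDegree_ne_zero {R : Type*} [CommSemiring R]
    {p : MvPolynomial σ R} (hp : p ≠ 0) : homogeneousComponent p.totalDegree p ≠ 0 := by
  obtain ⟨m, m_mem, hm⟩ := Finset.exists_mem_eq_sup p.support (support_nonempty.mpr hp)
    fun s ↦ s.sum fun _ e ↦ e
  have m_degree : m.degree = p.totalDegree := hm.symm
  intro h
  have coeff_eq := coeff_homogeneousComponent p.totalDegree p m
  rw [h, coeff_zero, if_pos m_degree] at coeff_eq
  exact mem_support_iff.mp m_mem coeff_eq.symm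

theorem mem_colon_sup_span_singleton {R : Type*} [CommRing R] {J : Ideal R} {p f' u : R}
    (hf : p * f' ∈ J) (hu : p ∣ u) : f' ∈ J.colon (J ⊔ Ideal.span {u} : Ideal R) := by
  obtain ⟨u', rfl⟩ := hu
  refine Submodule.mem_colon.mpr fun x hx ↦ ?_
  obtain ⟨j, hj, y, hy, rfl⟩ := Submodule.mem_sup.mp hx
  obtain ⟨t, rfl⟩ := Ideal.mem_span_singleton.mp hy
  have eq : f' * (j + p * u' * t) = f' * j + u' * t * (p * f') := by ring
  rw [smul_eq_mul, eq]
  exact J.add_mem (J.mul_mem_left _ hj) (J.mul_mem_left _ hf)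

theorem isRelPrime_of_colon_sup_span_singleton_le {I J : Ideal (MvPolynomial σ K)}
    {f u : MvPolynomial σ K} (f_mem : f ∈ J) (f_ne_zero : f ≠ 0)
    (hmin : ∀ v ∈ I, v ≠ 0 → f.totalDegree ≤ v.totalDegree)
    (hJ : J.colon (J ⊔ Ideal.span {u} : Ideal (MvPolynomial σ K)) ≤ I) : IsRelPrime u f := by
  rintro p hpu ⟨f', rfl⟩
  obtain ⟨p_ne_zero, f'_ne_zero⟩ := mul_ne_zero_iff.mp f_ne_zero
  have deg_le := hmin f' (hJ (mem_colon_sup_span_singleton f_mem hpu)) f'_ne_zero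
  rw [totalDegree_mul_of_isDomain p_ne_zero f'_ne_zero] at deg_le
  exact isUnit_of_totalDegree_eq_zero p_ne_zero (by lia)

theorem isWeaklyRegular_pair_of_isRelPrime {R : Type*} [CommRing R] [IsDomain R]
    [DecompositionMonoid R] {a b : R} (ha : a ≠ 0) (hab : IsRelPrime a b) :
    Sequence.IsWeaklyRegular R [a, b] := by
  rw [Sequence.isWeaklyRegular_cons_iff, Sequence.isWeaklyRegular_singleton_iff,
    isSMulRegular_quotient_iff_mem_of_smul_mem]
  refine ⟨fun _ _ ↦ mul_left_cancel₀ ha, fun x hx ↦ ?_⟩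
  simp only [Submodule.mem_smul_pointwise_iff_exists, Submodule.mem_top, true_and, smul_eq_mul]
    at hx ⊢
  obtain ⟨y, hy⟩ := hx
  obtain ⟨z, rfl⟩ := hab.dvd_of_dvd_mul_left ⟨y, hy.symm⟩
  exact ⟨z, rfl⟩

theorem isRegular_pair_of_isRelPrime {a b : MvPolynomial σ K} {d e : ℕ}
    (ha : a.IsHomogeneous d) (hb : b.IsHomogeneous e) (ha₀ : a ≠ 0) (ha' : ¬IsUnit a)
    (hb' : ¬IsUnit b) (hab : IsRelPrime a b) :
    Sequence.IsRegular (MvPolynomial σ K) [a, b] := by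
  refine ⟨isWeaklyRegular_pair_of_isRelPrime ha₀ hab, fun h ↦ ?_⟩
  have le_ker : Ideal.ofList [a, b] ≤ RingHom.ker (constantCoeff (R := K) (σ := σ)) :=
    Ideal.span_le.mpr <| List.forall_mem_cons.mpr
      ⟨constantCoeff_eq_zero_of_isHomogeneous ha ha', List.forall_mem_singleton.mpr <|
        constantCoeff_eq_zero_of_isHomogeneous hb hb'⟩
  rw [smul_eq_mul, Ideal.mul_top] at h
  exact RingHom.ker_ne_top _ (top_le_iff.mp (h.trans_le le_ker))

end Polynomial

section Linkage

attribute [local instance] MvPolynomial.gradedAlgebra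

theorem IsHomogeneousIdeal.isHomogeneous {I : Ideal (MvPolynomial (Fin (n + 1)) k)}
    (hI : IsHomogeneousIdeal I) : I.IsHomogeneous (homogeneousSubmodule (Fin (n + 1)) k) := by
  obtain ⟨S, hS, rfl⟩ := hI
  exact Ideal.homogeneous_span _ S hS

theorem isCI_ofList {rs : List (MvPolynomial (Fin (n + 1)) k)}
    (hom : ∀ r ∈ rs, ∃ d, r.IsHomogeneous d)
    (reg : Sequence.IsRegular (MvPolynomial (Fin (n + 1)) k) rs) : IsCI (Ideal.ofList rs) := by
  refine ⟨rs, fun r hr ↦ ?_, reg, rfl⟩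
  obtain ⟨d, hd⟩ := hom r hr
  refine exists_pos_isHomogeneous_of_not_isUnit hd fun r_unit ↦ reg.top_ne_smul ?_
  rw [smul_eq_mul, Ideal.mul_top,
    Ideal.eq_top_of_isUnit_mem (Ideal.ofList rs) (Ideal.subset_span hr) r_unit]

universe u

theorem stmt_5_general {m : ℕ} {K : Type u} [Field K] {I : Ideal (MvPolynomial (Fin m) K)}
    (I_ne_top : I ≠ ⊤) (I_hom : I.IsHomogeneous (homogeneousSubmodule (Fin m) K))
    {f u : MvPolynomial (Fin m) K} {rs : List (MvPolynomial (Fin m) K)}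
    (hext : ∀ i ≠ (f :: rs).length,
      Subsingleton (Abelian.Ext
        (ModuleCat.of (MvPolynomial (Fin m) K) (MvPolynomial (Fin m) K ⧸ I))
        (ModuleCat.of (MvPolynomial (Fin m) K) (MvPolynomial (Fin m) K)) i))
    (mem : ∀ r ∈ f :: rs, r ∈ I) (I_ne : I ≠ Ideal.ofList (f :: rs))
    (reg : Sequence.IsWeaklyRegular (MvPolynomial (Fin m) K) (f :: rs))
    {df du : ℕ} (hf : f.IsHomogeneous df) (hu : u.IsHomogeneous du)
    (hmin : ∀ v ∈ I, v ≠ 0 → ∀ e, v.IsHomogeneous e → df ≤ e)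
    (hcolon : (Ideal.ofList (f :: rs)).colon (I : Set (MvPolynomial (Fin m) K)) =
      Ideal.ofList (f :: rs) ⊔ Ideal.span {u}) :
    Sequence.IsRegular (MvPolynomial (Fin m) K) [u, f] := by
  have f_mem : f ∈ Ideal.ofList (f :: rs) := Ideal.subset_span List.mem_cons_self
  have f_ne_zero : f ≠ 0 := by
    rintro rfl
    exact IsSMulRegular.not_zero ((Sequence.isWeaklyRegular_cons_iff _ _ _).mp reg).1
  have f_not_isUnit : ¬IsUnit f := fun h ↦
    I_ne_top (I.eq_top_of_isUnit_mem (mem f List.mem_cons_self) h)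
  have deg_le : ∀ v ∈ I, v ≠ 0 → f.totalDegree ≤ v.totalDegree := fun v v_mem hv ↦
    (hf.totalDegree f_ne_zero).trans_le <| hmin _ (homogeneousComponent_mem_of_mem I_hom v_mem _)
      (homogeneousComponent_totalDegree_ne_zero hv) _ (homogeneousComponent_isHomogeneous _ _)
  have := hilbert_syzygy K m (ModuleCat.of _ (MvPolynomial (Fin m) K ⧸ I))
  have relPrime : IsRelPrime u f := isRelPrime_of_colon_sup_span_singleton_le f_mem f_ne_zero
    deg_le (hcolon ▸ colon_colon_ofList_le (d := m) mem reg hext)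
  have u_ne_zero : u ≠ 0 := by
    rintro rfl
    exact f_not_isUnit (isRelPrime_zero_left.mp relPrime)
  have u_not_isUnit : ¬IsUnit u := fun h ↦ by
    have colon_eq_top := hcolon.trans (Ideal.eq_top_of_isUnit_mem _
      (Ideal.mem_sup_right (Ideal.mem_span_singleton_self u)) h)
    exact I_ne (le_antisymm ((Submodule.colon_eq_top_iff_subset _).mp colon_eq_top)
      (Ideal.span_le.mpr mem))
  exact isRegular_pair_of_isRelPrime hu hf u_ne_zero u_not_isUnit f_not_isUnit relPrime

end Linkage

/-- If `f, g, h` is a regular sequence of homogeneous elements of a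
non-complete-intersection height-three Gorenstein ideal `I`, where `deg f` is the least
degree of a nonzero homogeneous element of `I`, and `(f,g,h) : I = (f,g,h,u)` with `u`
homogeneous, then `u, f` is a regular sequence. -/
theorem stmt_5 (I : Ideal (MvPolynomial (Fin (n+1)) k))
    (hGor : IsArithGorHt3 I) (hnotCI : ¬ IsCI I)
    (f g h u : MvPolynomial (Fin (n+1)) k)
    (hfI : f ∈ I) (hgI : g ∈ I) (hhI : h ∈ I)
    (df : ℕ) (hfhom : MvPolynomial.IsHomogeneous f df) (hf0 : f ≠ 0)
    (hfmin : ∀ v ∈ I, v ≠ 0 → ∀ e, MvPolynomial.IsHomogeneous v e → df ≤ e)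
    (hghom : ∃ d, MvPolynomial.IsHomogeneous g d)
    (hhhom : ∃ d, MvPolynomial.IsHomogeneous h d)
    (huhom : ∃ d, MvPolynomial.IsHomogeneous u d)
    (hreg : RingTheory.Sequence.IsRegular (MvPolynomial (Fin (n+1)) k) [f, g, h])
    (hu : (Ideal.span {f, g, h}).colon I = Ideal.span {f, g, h, u}) :
    RingTheory.Sequence.IsRegular (MvPolynomial (Fin (n+1)) k) [u, f] := by
  obtain ⟨I_ne_top, I_hom, -, hext, -⟩ := hGor
  obtain ⟨du, hdu⟩ := huhom
  have hom : ∀ r ∈ [f, g, h], ∃ d, r.IsHomogeneous d :=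
    List.forall_mem_cons.mpr ⟨⟨df, hfhom⟩, by simp [hghom, hhhom]⟩
  have I_ne : I ≠ Ideal.ofList [f, g, h] := fun hI ↦ hnotCI (hI ▸ isCI_ofList hom hreg)
  have hcolon : (Ideal.ofList [f, g, h]).colon I = Ideal.ofList [f, g, h] ⊔ Ideal.span {u} := by
    simpa only [Ideal.ofList_cons, Ideal.ofList_nil, sup_bot_eq, Ideal.span_insert, sup_assoc]
      using hu
  exact stmt_5_general (rs := [g, h]) I_ne_top I_hom.isHomogeneous
    (fun i hi ↦ subsingleton_abelianExt (hext i hi)) (by simp [hfI, hgI, hhI]) I_ne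
    hreg.toIsWeaklyRegular hfhom hdu hfmin hcolon

end
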